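/- arXiv:2506.09434 — 4 statements merged into one kernel-verified Lean document; each statement's English description precedes it below -/
import Mathlib

section
/- Let N, M ≥ 2 and suppose every task-level aggregator T_j is Schur-concave. Then for every admissible allocation A = (r_{ij}), the admissible homogeneous allocation A' whose every row equals (s_1/N,…,s_M/N), where s_j = Σ_{i=1}^N r_{ij}, satisfies R(A') ≥ R(A). Consequently R_het = R_hom and the heterogeneity gain ΔR equals 0. -/
open Finset

/-- An N×M allocation matrix is admissible if all entries are nonnegative and
every agent's (row's) efforts sum to 1. -/
def Admissible {N M : ℕ} (A : Fin N → Fin M → ℝ) : Prop :=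
  (∀ i j, 0 ≤ A i j) ∧ ∀ i, ∑ j, A i j = 1

/-- An allocation is homogeneous if all rows coincide. -/
def Homogeneous {N M : ℕ} (A : Fin N → Fin M → ℝ) : Prop :=
  ∀ i i' : Fin N, A i = A i'

/-- The column of task `j`. -/
def col {N M : ℕ} (A : Fin N → Fin M → ℝ) (j : Fin M) : Fin N → ℝ :=
  fun i => A i j

/-- `x` majorizes `y`: equal total sums, and every partial sum of entries
of `y` is dominated by a partial sum of entries of `x` of the same size
(equivalently, the sum of the m largest entries of x dominates that of y). -/
def Majorizes {k : ℕ} (x y : Fin k → ℝ) : Prop :=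
  (∑ i, x i = ∑ i, y i) ∧
    ∀ t : Finset (Fin k), ∃ s : Finset (Fin k), s.card = t.card ∧ ∑ i ∈ t, y i ≤ ∑ i ∈ s, x i

/-- `x` is a permutation (rearrangement) of `y`. -/
def IsPermOf {k : ℕ} (x y : Fin k → ℝ) : Prop :=
  ∃ σ : Equiv.Perm (Fin k), x = y ∘ σ

/-- A function of a finite real vector is symmetric if it is permutation invariant. -/
def SymmFun {k : ℕ} (f : (Fin k → ℝ) → ℝ) : Prop :=
  ∀ (σ : Equiv.Perm (Fin k)) (x : Fin k → ℝ), f (x ∘ σ) = f x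

/-- Schur-concavity: symmetric and antitone with respect to majorization. -/
def SchurConcave {k : ℕ} (f : (Fin k → ℝ) → ℝ) : Prop :=
  SymmFun f ∧ ∀ x y : Fin k → ℝ, Majorizes x y → f x ≤ f y

/-- Team reward `R(A) = U(T_1(a_1), …, T_M(a_M))`. -/
def Reward {N M : ℕ} (U : (Fin M → ℝ) → ℝ) (T : Fin M → (Fin N → ℝ) → ℝ)
    (A : Fin N → Fin M → ℝ) : ℝ :=
  U fun j => T j (col A j)

/-- Every vector majorizes the constant vector of its mean. -/
theorem majorizes_const_mean {k : ℕ} [NeZero k] (x : Fin k → ℝ) :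
    Majorizes x fun _ => (∑ i, x i) / k := by
  have hk : (k : ℝ) ≠ 0 := Nat.cast_ne_zero.mpr (NeZero.ne k)
  refine ⟨by simp [mul_div_cancel₀ _ hk], fun t => ?_⟩
  -- Averaging over the cyclic shifts of `t`, some shift does at least as well as the mean.
  have hsum : ∑ c : Fin k, ∑ i ∈ t, x (i + c) = t.card * ∑ i, x i := by
    rw [Finset.sum_comm]
    have hshift (i : Fin k) : ∑ c, x (i + c) = ∑ c, x c :=
      Equiv.sum_comp (Equiv.addLeft i) x
    simp [hshift]
  obtain ⟨c, -, hc⟩ := Finset.exists_le_of_sum_le (s := (Finset.univ : Finset (Fin k)))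
    (f := fun _ => ∑ _i ∈ t, (∑ i, x i) / k) (g := fun c => ∑ i ∈ t, x (i + c))
    Finset.univ_nonempty (by
      rw [hsum]
      simp only [Finset.sum_const, Finset.card_univ, Fintype.card_fin, nsmul_eq_mul]
      exact le_of_eq (by field_simp))
  exact ⟨t.map (Equiv.addRight c).toEmbedding, by simp, by simpa using hc⟩

/-- Averaging the rows of an admissible allocation yields an admissible allocation. -/
theorem Admissible.const_mean {N M : ℕ} [NeZero N] {A : Fin N → Fin M → ℝ} (hA : Admissible A) :
    Admissible (fun (_ : Fin N) (j : Fin M) => (∑ i, A i j) / N) := by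
  have hN : (N : ℝ) ≠ 0 := Nat.cast_ne_zero.mpr (NeZero.ne N)
  refine ⟨fun _ j => div_nonneg (Finset.sum_nonneg fun i _ => hA.1 i j) N.cast_nonneg, fun _ => ?_⟩
  rw [← Finset.sum_div, Finset.sum_comm]
  simp [hA.2, hN]

/-- With Schur-concave task aggregators, averaging the rows does not decrease the reward. -/
theorem reward_le_reward_const_mean {N M : ℕ} [NeZero N] {T : Fin M → (Fin N → ℝ) → ℝ}
    {U : (Fin M → ℝ) → ℝ} (hT : ∀ j, SchurConcave (T j)) (hU : Monotone U)
    (A : Fin N → Fin M → ℝ) :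
    Reward U T A ≤ Reward U T (fun (_ : Fin N) (j : Fin M) => (∑ i, A i j) / N) :=
  hU fun j => (hT j).2 _ _ (majorizes_const_mean (col A j))

/-- No heterogeneity gain via Schur-concave inner aggregators:
if each `T j` is Schur-concave (and `U` is symmetric and non-decreasing in each
coordinate), then for every admissible `A` the homogeneous allocation whose rows
all equal `(s_1/N, …, s_M/N)` (column averages) is admissible and does at least
as well; consequently `R_het = R_hom` and `ΔR = 0`. -/
theorem stmt1 {N M : ℕ} (hN : 2 ≤ N) (hM : 2 ≤ M)
    (T : Fin M → (Fin N → ℝ) → ℝ) (U : (Fin M → ℝ) → ℝ)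
    (hT : ∀ j, SchurConcave (T j)) (hUmono : Monotone U) (hUsymm : SymmFun U) :
    (∀ A : Fin N → Fin M → ℝ, Admissible A →
        Admissible (fun (_ : Fin N) (j : Fin M) => (∑ i, A i j) / N) ∧
        Homogeneous (fun (_ : Fin N) (j : Fin M) => (∑ i, A i j) / N) ∧
        Reward U T A ≤ Reward U T (fun (_ : Fin N) (j : Fin M) => (∑ i, A i j) / N)) ∧
      sSup {r : ℝ | ∃ B : Fin N → Fin M → ℝ, Admissible B ∧ Reward U T B = r} =
        sSup {r : ℝ | ∃ B : Fin N → Fin M → ℝ,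
          Admissible B ∧ Homogeneous B ∧ Reward U T B = r} ∧
      sSup {r : ℝ | ∃ B : Fin N → Fin M → ℝ, Admissible B ∧ Reward U T B = r} -
        sSup {r : ℝ | ∃ B : Fin N → Fin M → ℝ,
          Admissible B ∧ Homogeneous B ∧ Reward U T B = r} = 0 := by
  have : NeZero N := ⟨by omega⟩
  have hsup : sSup {r : ℝ | ∃ B : Fin N → Fin M → ℝ, Admissible B ∧ Reward U T B = r} =
      sSup {r : ℝ | ∃ B : Fin N → Fin M → ℝ,
        Admissible B ∧ Homogeneous B ∧ Reward U T B = r} := by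
    apply csSup_eq_csSup_of_forall_exists_le
    · rintro _ ⟨B, hB, rfl⟩
      exact ⟨_, ⟨_, hB.const_mean, fun _ _ => rfl, rfl⟩, reward_le_reward_const_mean hT hUmono B⟩
    · rintro _ ⟨B, hB, -, rfl⟩
      exact ⟨_, ⟨B, hB, rfl⟩, le_rfl⟩
  exact ⟨fun A hA => ⟨hA.const_mean, fun _ _ => rfl, reward_le_reward_const_mean hT hUmono A⟩,
    hsup, sub_eq_zero.mpr hsup⟩
end

section
/- Let N = M ≥ 2 and consider the softmax reward with inner temperature t and outer temperature τ. If t ≤ 0, then for every τ ∈ ℝ the heterogeneity gain satisfies ΔR(t,τ;N) = 0. -/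
open Finset

/-- Softmax inner aggregator with temperature `t`: the task score
`T_j(A) = Σ_i (e^{t·r_{ij}} / Σ_ℓ e^{t·r_{ℓj}}) · r_{ij}` applied to a column. -/
noncomputable def innerScore (t : ℝ) {N : ℕ} (a : Fin N → ℝ) : ℝ :=
  ∑ i, Real.exp (t * a i) / (∑ l, Real.exp (t * a l)) * a i

/-- Softmax team reward with inner temperature `t` and outer temperature `τ`:
`R(A) = Σ_j (e^{τ·T_j} / Σ_ℓ e^{τ·T_ℓ}) · T_j`. -/
noncomputable def softReward (t τ : ℝ) {N : ℕ} (A : Fin N → Fin N → ℝ) : ℝ :=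
  ∑ j, Real.exp (τ * innerScore t (col A j)) /
      (∑ l, Real.exp (τ * innerScore t (col A l))) * innerScore t (col A j)

/-- `σ(t,N) = e^t / (e^t + N − 1)`. -/
noncomputable def sigma' (t : ℝ) (N : ℕ) : ℝ :=
  Real.exp t / (Real.exp t + N - 1)

/-- Heterogeneity gain `ΔR(t,τ;N) = R_het − R_hom` for the softmax reward. -/
noncomputable def hetGain (t τ : ℝ) (N : ℕ) : ℝ :=
  sSup {r : ℝ | ∃ A : Fin N → Fin N → ℝ, Admissible A ∧ softReward t τ A = r} -
    sSup {r : ℝ | ∃ A : Fin N → Fin N → ℝ,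
      Admissible A ∧ Homogeneous A ∧ softReward t τ A = r}

/-- The softmax average is monotone in its temperature. -/
theorem innerScore_mono {N : ℕ} (a : Fin N → ℝ) {s t : ℝ} (hst : s ≤ t) :
    innerScore s a ≤ innerScore t a := by
  rcases isEmpty_or_nonempty (Fin N) with hN | hN
  · simp [innerScore]
  have hZ : ∀ u : ℝ, 0 < ∑ l, Real.exp (u * a l) := fun u =>
    Finset.sum_pos (fun i _ => Real.exp_pos _) Finset.univ_nonempty
  have hquot : ∀ u : ℝ, innerScore u a =
      (∑ i, Real.exp (u * a i) * a i) / ∑ l, Real.exp (u * a l) := by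
    intro u
    rw [innerScore, Finset.sum_div]
    exact Finset.sum_congr rfl fun i _ => by ring
  rw [hquot, hquot, div_le_div_iff₀ (hZ s) (hZ t)]
  have hpair : 0 ≤ ∑ i, ∑ j, (a i - a j) *
      (Real.exp (t * a i) * Real.exp (s * a j) - Real.exp (s * a i) * Real.exp (t * a j)) := by
    refine Finset.sum_nonneg fun i _ => Finset.sum_nonneg fun j _ => ?_
    rw [← Real.exp_add, ← Real.exp_add]
    rcases le_total (a i) (a j) with h | h
    · refine mul_nonneg_of_nonpos_of_nonpos (sub_nonpos.2 h)
        (sub_nonpos.2 (Real.exp_le_exp.2 ?_))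
      nlinarith
    · refine mul_nonneg (sub_nonneg.2 h) (sub_nonneg.2 (Real.exp_le_exp.2 ?_))
      nlinarith
  have hexpand : ∑ i, ∑ j, (a i - a j) *
      (Real.exp (t * a i) * Real.exp (s * a j) - Real.exp (s * a i) * Real.exp (t * a j)) =
      2 * ((∑ i, Real.exp (t * a i) * a i) * (∑ l, Real.exp (s * a l)) -
        (∑ i, Real.exp (s * a i) * a i) * ∑ l, Real.exp (t * a l)) := by
    have hterm : ∀ i j, (a i - a j) *
        (Real.exp (t * a i) * Real.exp (s * a j) - Real.exp (s * a i) * Real.exp (t * a j)) =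
        (Real.exp (t * a i) * a i) * Real.exp (s * a j)
          - (Real.exp (s * a i) * a i) * Real.exp (t * a j)
          - Real.exp (t * a i) * (Real.exp (s * a j) * a j)
          + Real.exp (s * a i) * (Real.exp (t * a j) * a j) := fun i j => by ring
    simp only [hterm, Finset.sum_add_distrib, Finset.sum_sub_distrib, ← Finset.sum_mul_sum]
    ring
  linarith

theorem innerScore_nonneg {N : ℕ} (t : ℝ) {a : Fin N → ℝ} (ha : ∀ i, 0 ≤ a i) :
    0 ≤ innerScore t a :=
  Finset.sum_nonneg fun i _ => mul_nonneg
    (div_nonneg (Real.exp_pos _).le (Finset.sum_nonneg fun _ _ => (Real.exp_pos _).le)) (ha i)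

theorem innerScore_zero {N : ℕ} (a : Fin N → ℝ) : innerScore 0 a = (∑ i, a i) / N := by
  simp [innerScore, ← Finset.mul_sum, div_eq_inv_mul]

theorem innerScore_const {N : ℕ} (hN : N ≠ 0) (t c : ℝ) :
    innerScore t (fun _ : Fin N => c) = c := by
  have : (N : ℝ) ≠ 0 := Nat.cast_ne_zero.2 hN
  simp only [innerScore, Finset.sum_const, Finset.card_univ, Fintype.card_fin, nsmul_eq_mul]
  field_simp

theorem innerScore_const_mul {N : ℕ} (t c : ℝ) (a : Fin N → ℝ) :
    innerScore t (fun i => c * a i) = c * innerScore (t * c) a := by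
  simp only [innerScore, Finset.mul_sum, mul_assoc]
  exact Finset.sum_congr rfl fun i _ => by ring

/-- The softmax average of a nonnegative vector with sum at most `1` is dominated by that of
some probability vector. -/
theorem exists_simplex_innerScore_le {N : ℕ} (hN : N ≠ 0) (τ : ℝ) {T : Fin N → ℝ}
    (hT : ∀ i, 0 ≤ T i) (hsum : ∑ i, T i ≤ 1) :
    ∃ p : Fin N → ℝ, (∀ i, 0 ≤ p i) ∧ ∑ i, p i = 1 ∧ innerScore τ T ≤ innerScore τ p := by
  have hN' : (N : ℝ) ≠ 0 := Nat.cast_ne_zero.2 hN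
  have hS : 0 ≤ ∑ i, T i := Finset.sum_nonneg fun i _ => hT i
  by_cases hunif : τ ≤ 0 ∨ ∑ i, T i = 0
  · refine ⟨fun _ => 1 / N, fun _ => by positivity, by simp [hN'], ?_⟩
    rw [innerScore_const hN]
    rcases hunif with hτ | h0
    · calc innerScore τ T ≤ innerScore 0 T := innerScore_mono T hτ
        _ = (∑ i, T i) / N := innerScore_zero T
        _ ≤ 1 / N := by gcongr
    · have hzero : T = fun _ => 0 := funext fun i =>
        (Finset.sum_eq_zero_iff_of_nonneg fun i _ => hT i).1 h0 i (Finset.mem_univ i)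
      rw [hzero, innerScore_const hN]
      positivity
  · push Not at hunif
    obtain ⟨hτ, hne⟩ := hunif
    set S := ∑ i, T i with hSdef
    have hp : ∀ i, 0 ≤ T i / S := fun i => div_nonneg (hT i) hS
    refine ⟨fun i => T i / S, hp, by rw [← Finset.sum_div, ← hSdef, div_self hne], ?_⟩
    have hscale : T = fun i => S * (T i / S) := funext fun i => by field_simp
    calc innerScore τ T = S * innerScore (τ * S) (fun i => T i / S) := by
          rw [← innerScore_const_mul, ← hscale]
      _ ≤ S * innerScore τ (fun i => T i / S) :=
          mul_le_mul_of_nonneg_left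
            (innerScore_mono _ (mul_le_of_le_one_right hτ.le hsum)) hS
      _ ≤ innerScore τ (fun i => T i / S) :=
          mul_le_of_le_one_left (innerScore_nonneg τ hp) hsum

theorem softReward_eq_innerScore (t τ : ℝ) {N : ℕ} (A : Fin N → Fin N → ℝ) :
    softReward t τ A = innerScore τ fun j => innerScore t (col A j) := rfl

theorem sum_innerScore_col_le_one {N : ℕ} (hN : N ≠ 0) {t : ℝ} (ht : t ≤ 0)
    {A : Fin N → Fin N → ℝ} (hA : Admissible A) : ∑ j, innerScore t (col A j) ≤ 1 := by
  have hN' : (N : ℝ) ≠ 0 := Nat.cast_ne_zero.2 hN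
  calc ∑ j, innerScore t (col A j) ≤ ∑ j, (∑ i, A i j) / N :=
        Finset.sum_le_sum fun j _ =>
          (innerScore_mono (col A j) ht).trans_eq (innerScore_zero (col A j))
    _ = 1 := by
        rw [← Finset.sum_div, Finset.sum_comm]
        simp [hA.2, hN']

/-- Softmax heterogeneity gain, `t ≤ 0` case: for `N = M ≥ 2`,
if the inner temperature satisfies `t ≤ 0`, then `ΔR(t,τ;N) = 0` for every `τ`. -/
theorem stmt3 (N : ℕ) (hN : 2 ≤ N) (t τ : ℝ) (ht : t ≤ 0) :
    hetGain t τ N = 0 := by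
  have hN0 : N ≠ 0 := by lia
  refine sub_eq_zero.2 (csSup_eq_csSup_of_forall_exists_le ?_ ?_)
  · rintro _ ⟨A, hA, rfl⟩
    obtain ⟨p, hp, hsum, hle⟩ := exists_simplex_innerScore_le hN0 τ
      (fun j => innerScore_nonneg t (a := col A j) fun i => hA.1 i j)
      (sum_innerScore_col_le_one hN0 ht hA)
    refine ⟨_, ⟨fun _ => p, ⟨fun _ => hp, fun _ => hsum⟩, fun _ _ => rfl, rfl⟩, ?_⟩
    have hcol : (fun j => innerScore t (col (fun _ : Fin N => p) j)) = p :=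
      funext fun j => innerScore_const hN0 t (p j)
    rwa [softReward_eq_innerScore, softReward_eq_innerScore, hcol]
  · rintro _ ⟨A, hA, -, rfl⟩
    exact ⟨_, ⟨A, hA, rfl⟩, le_rfl⟩
end

section
/- Let N, M ≥ 2. Let g : [0,1] → ℝ≥0 be strictly convex with g(0) = 0, and let h : ℝ≥0 → ℝ be strictly concave, increasing, with h(0) = 0. Define the task-level aggregators T_j(a_j) = Σ_{i=1}^N g(r_{ij}) and the outer aggregator U(y_1,…,y_M) = Σ_{j=1}^M h(y_j), so the team reward is R(A) = Σ_{j=1}^M h(Σ_{i=1}^N g(r_{ij})). Then the heterogeneity gain satisfies ΔR > 0, i.e., there is an admissible allocation whose reward strictly exceeds the reward of every admissible homogeneous allocation. -/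
open Finset

/-- The team reward of an allocation for the inner function `g` and the outer function `h`. -/
def reward {N M : ℕ} (g h : ℝ → ℝ) (A : Fin N → Fin M → ℝ) : ℝ :=
  ∑ j, h (∑ i, g (A i j))

section RealFunctions

open Filter Topology

variable {g h : ℝ → ℝ}

lemma StrictConvexOn.pos_of_nonneg (hg : StrictConvexOn ℝ (Set.Icc 0 1) g)
    (hgnonneg : ∀ x ∈ Set.Icc (0 : ℝ) 1, 0 ≤ g x) (hg0 : g 0 = 0) {x : ℝ}
    (hx : x ∈ Set.Ioc (0 : ℝ) 1) : 0 < g x := by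
  have h1 := hg.2 (by simp) ⟨hx.1.le, hx.2⟩ hx.1.ne
    (by norm_num : (0 : ℝ) < 1 / 2) (by norm_num : (0 : ℝ) < 1 / 2) (by norm_num)
  have h2 := hgnonneg ((1 / 2 : ℝ) • 0 + (1 / 2 : ℝ) • x) (by
    simp only [smul_eq_mul]
    constructor <;> linarith [hx.1, hx.2])
  simp only [smul_eq_mul, hg0] at h1 h2
  linarith

lemma ConvexOn.monotoneOn_of_nonneg (hg : ConvexOn ℝ (Set.Icc 0 1) g)
    (hgnonneg : ∀ x ∈ Set.Icc (0 : ℝ) 1, 0 ≤ g x) (hg0 : g 0 = 0) :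
    MonotoneOn g (Set.Icc 0 1) := by
  intro x hx y hy hxy
  rcases hx.1.eq_or_lt with rfl | hx0
  · rw [hg0]; exact hgnonneg y hy
  · have hy0 : 0 < y := hx0.trans_le hxy
    have h1 := hg.2 (Set.left_mem_Icc.2 zero_le_one) hy
      (by rw [sub_nonneg, div_le_one hy0]; exact hxy : 0 ≤ 1 - x / y)
      (by positivity : 0 ≤ x / y) (by ring)
    simp only [smul_eq_mul, hg0, mul_zero, zero_add, div_mul_cancel₀ x hy0.ne'] at h1
    exact h1.trans (mul_le_of_le_one_left (hgnonneg y hy) ((div_le_one hy0).2 hxy))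

/-- Moving two points towards each other increases the sum of the values of a strictly concave
function. -/
lemma StrictConcaveOn.add_lt_add_of_lt {s : Set ℝ} (hh : StrictConcaveOn ℝ s h) {p q r : ℝ}
    (hp : p ∈ s) (hr : q + r - p ∈ s) (hpq : p < q) (hpr : p < r) :
    h p + h (q + r - p) < h q + h r := by
  have hd : 0 < q + r - p - p := by linarith
  have key : ∀ u v : ℝ, p < u → p < v → u + v = q + r →
      (v - p) / (q + r - p - p) * h p + (u - p) / (q + r - p - p) * h (q + r - p) < h u := by
    intro u v hu hv huv
    have := hh.2 hp hr (by linarith)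
      (div_pos (by linarith) hd : 0 < (v - p) / (q + r - p - p))
      (div_pos (by linarith) hd : 0 < (u - p) / (q + r - p - p))
      (by field_simp; linarith)
    simp only [smul_eq_mul] at this
    have hcomb : (v - p) / (q + r - p - p) * p + (u - p) / (q + r - p - p) * (q + r - p) = u := by
      obtain rfl : v = q + r - u := by linarith
      field_simp
      ring
    rwa [hcomb] at this
  have h1 := key q r hpq hpr rfl
  have h2 := key r q hpr hpq (by ring)
  have h3 : (r - p) / (q + r - p - p) + (q - p) / (q + r - p - p) = 1 := by
    field_simp; ring
  have e1 : (r - p) / (q + r - p - p) = 1 - (q - p) / (q + r - p - p) := by linarith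
  rw [e1] at h1 h2
  linarith

lemma StrictConcaveOn.strictMonoOn_of_monotoneOn (hh : StrictConcaveOn ℝ (Set.Ici 0) h)
    (hhmono : MonotoneOn h (Set.Ici 0)) : StrictMonoOn h (Set.Ici 0) := by
  intro x hx y hy hxy
  simp only [Set.mem_Ici] at hx hy
  have h1 := hh.add_lt_add_of_lt (p := x) (q := y) (r := y) hx
    (by simp only [Set.mem_Ici]; linarith) hxy hxy
  have h2 := hhmono (a := y) (b := y + y - x) hy (by simp only [Set.mem_Ici]; linarith)
    (by linarith)
  linarith

/-- A convex function on `[0, 1]` that is minimal at `0` extends continuously from `[0, 1)`. -/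
lemma ConvexOn.exists_continuousOn_extension (hg : ConvexOn ℝ (Set.Icc 0 1) g)
    (hgnonneg : ∀ x ∈ Set.Icc (0 : ℝ) 1, 0 ≤ g x) (hg0 : g 0 = 0) :
    ∃ G : ℝ → ℝ, ContinuousOn G (Set.Icc 0 1) ∧ (∀ x ≠ 1, G x = g x) ∧ g (1 / 2) ≤ G 1 := by
  have hmono := hg.monotoneOn_of_nonneg hgnonneg hg0
  have hbdd : BddAbove (g '' Set.Ioo 0 1) := by
    refine ⟨g 1, ?_⟩
    rintro _ ⟨x, hx, rfl⟩
    exact hmono ⟨hx.1.le, hx.2.le⟩ (by simp) hx.2.le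
  refine ⟨Function.update g 1 (sSup (g '' Set.Ioo 0 1)), continuousOn_update_iff.2 ⟨?_, ?_⟩,
    fun x hx => Function.update_of_ne hx _ _, ?_⟩
  · intro x ⟨hx, hx1⟩
    have hlt : x < 1 := lt_of_le_of_ne hx.2 hx1
    rcases hx.1.eq_or_lt with rfl | hx0
    · rw [ContinuousWithinAt, hg0]
      refine tendsto_of_tendsto_of_tendsto_of_le_of_le' (g := fun _ => 0)
        (h := fun x => x * g 1) tendsto_const_nhds ?_ ?_ ?_
      · have : ContinuousWithinAt (fun x : ℝ => x * g 1) (Set.Icc 0 1 \ {1}) 0 := by fun_prop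
        simpa [ContinuousWithinAt] using this
      · filter_upwards [self_mem_nhdsWithin] with y hy using hgnonneg y hy.1
      · filter_upwards [self_mem_nhdsWithin] with y hy
        have h1 := hg.2 (Set.left_mem_Icc.2 zero_le_one) (Set.right_mem_Icc.2 zero_le_one)
          (by linarith [hy.1.2] : 0 ≤ 1 - y) hy.1.1 (by ring)
        simpa [hg0] using h1
    · have := hg.continuousOn_interior
      rw [interior_Icc] at this
      exact (this.continuousAt (isOpen_Ioo.mem_nhds ⟨hx0, hlt⟩)).continuousWithinAt
  · intro _
    refine (MonotoneOn.tendsto_nhdsWithin_Ioo_left ⟨1 / 2, by norm_num⟩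
      (hmono.mono Set.Ioo_subset_Icc_self) hbdd).mono_left (nhdsWithin_mono _ ?_)
    exact fun x hx => lt_of_le_of_ne hx.1.2 hx.2
  · rw [Function.update_self]
    exact le_csSup hbdd ⟨1 / 2, by norm_num, rfl⟩

/-- A monotone strictly concave function on `[0, ∞)` extends continuously from `(0, ∞)`, and the
extension inherits strict monotonicity and a strict form of subadditivity. -/
lemma StrictConcaveOn.exists_continuousOn_extension (hh : StrictConcaveOn ℝ (Set.Ici 0) h)
    (hhmono : MonotoneOn h (Set.Ici 0)) :
    ∃ H : ℝ → ℝ, ContinuousOn H (Set.Ici 0) ∧ (∀ x ≠ 0, H x = h x) ∧ h 0 ≤ H 0 ∧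
      StrictMonoOn H (Set.Ici 0) ∧
      ∀ x y, 0 < x → 0 < y → H (x + y) + H 0 < H x + H y := by
  have hstrict := hh.strictMonoOn_of_monotoneOn hhmono
  have hlb : h 0 ∈ lowerBounds (h '' Set.Ioi 0) := by
    rintro _ ⟨x, hx, rfl⟩
    exact hhmono (by simp) (Set.mem_Ici.2 (le_of_lt hx)) (le_of_lt hx)
  have hcont : ContinuousOn h (Set.Ioi 0) := by
    have := hh.concaveOn.continuousOn_interior
    rwa [interior_Ici] at this
  have hinf : ∀ x, 0 < x → sInf (h '' Set.Ioi 0) ≤ h x := fun x hx =>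
    csInf_le ⟨_, hlb⟩ ⟨x, hx, rfl⟩
  have hdiff : Set.Ici (0 : ℝ) \ {0} = Set.Ioi 0 := Set.Ici_sdiff_left
  refine ⟨Function.update h 0 (sInf (h '' Set.Ioi 0)), continuousOn_update_iff.2 ⟨?_, ?_⟩,
    fun x hx => Function.update_of_ne hx _ _, ?_, ?_, ?_⟩
  · rwa [hdiff]
  · intro _
    rw [hdiff]
    exact (hhmono.mono Set.Ioi_subset_Ici_self).tendsto_nhdsGT ⟨_, hlb⟩
  · rw [Function.update_self]
    exact le_csInf ⟨_, 1, by simp, rfl⟩ hlb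
  · intro x hx y hy hxy
    simp only [Set.mem_Ici] at hx hy
    have hy0 : 0 < y := hx.trans_lt hxy
    rw [Function.update_of_ne hy0.ne']
    rcases hx.eq_or_lt with rfl | hx0
    · rw [Function.update_self]
      exact (hinf (y / 2) (by linarith)).trans_lt
        (hstrict (by simp only [Set.mem_Ici]; linarith) hy (by linarith))
    · rw [Function.update_of_ne hx0.ne']
      exact hstrict hx hy hxy
  · intro x y hx hy
    rw [Function.update_of_ne hx.ne', Function.update_of_ne hy.ne',
      Function.update_of_ne (by positivity), Function.update_self]
    obtain ⟨d, hd0, hd⟩ := exists_between (lt_min hx hy)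
    obtain ⟨hdx, hdy⟩ := lt_min_iff.1 hd
    have h1 := hh.add_lt_add_of_lt (p := d) (q := x) (r := y) hd0.le
      (by simp only [Set.mem_Ici]; linarith) hdx hdy
    refine lt_of_le_of_lt ?_ h1
    have htend : Tendsto (fun e => h (x + y - e) + sInf (h '' Set.Ioi 0)) (𝓝[>] 0)
        (𝓝 (h (x + y) + sInf (h '' Set.Ioi 0))) := by
      have hc : ContinuousAt h (x + y - 0) := by
        rw [sub_zero]
        exact hcont.continuousAt (isOpen_Ioi.mem_nhds (by simp only [Set.mem_Ioi]; linarith))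
      have hc2 : ContinuousAt (fun e : ℝ => h (x + y - e)) 0 :=
        ContinuousAt.comp (f := fun e : ℝ => x + y - e) hc (by fun_prop)
      have := hc2.tendsto.mono_left (nhdsWithin_le_nhds (s := Set.Ioi 0))
      simp only [sub_zero] at this
      exact this.add_const _
    refine le_of_tendsto htend ?_
    filter_upwards [Ioo_mem_nhdsGT hd0] with e he
    have h2 := hh.add_lt_add_of_lt (p := e) (q := d) (r := x + y - d) he.1.le
      (by simp only [Set.mem_Ici]; linarith [he.2]) he.2 (by linarith [he.2])
    have h3 := hinf e he.1
    rw [show d + (x + y - d) - e = x + y - e by ring] at h2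
    linarith

end RealFunctions

section Allocations

open Filter Topology

variable {N M : ℕ} {g h : ℝ → ℝ}

lemma Admissible.le_one {A : Fin N → Fin M → ℝ} (hA : Admissible A) (i : Fin N) (j : Fin M) :
    A i j ≤ 1 := by
  rw [← hA.2 i]
  exact single_le_sum (fun j _ => hA.1 i j) (mem_univ j)

lemma admissible_const {c : Fin M → ℝ} (hc : c ∈ stdSimplex ℝ (Fin M)) :
    Admissible (fun _ : Fin N => c) :=
  ⟨fun _ j => hc.1 j, fun _ => hc.2⟩

lemma continuousOn_reward (hg : ContinuousOn g (Set.Icc 0 1))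
    (hgnonneg : ∀ x ∈ Set.Icc (0 : ℝ) 1, 0 ≤ g x) (hh : ContinuousOn h (Set.Ici 0)) :
    ContinuousOn (reward (N := N) (M := M) g h) {A | Admissible A} := by
  unfold reward
  refine continuousOn_finsetSum _ fun j _ => hh.comp (continuousOn_finsetSum _ fun i _ =>
    hg.comp (by fun_prop) fun A hA => ⟨hA.1 i j, hA.le_one i j⟩) fun A hA => ?_
  exact sum_nonneg fun i _ => hgnonneg _ ⟨hA.1 i j, hA.le_one i j⟩

/-- When all agents work on one task, moving one of them to another task is an improvement. -/
lemma exists_reward_lt_of_single (hN : 2 ≤ N) (hM : 2 ≤ M) (hg0 : g 0 = 0) (hg1 : 0 < g 1)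
    (hsub : ∀ x y, 0 < x → 0 < y → h (x + y) + h 0 < h x + h y) :
    ∃ B : Fin N → Fin M → ℝ, Admissible B ∧
      ∀ j : Fin M, reward g h (fun _ : Fin N => Pi.single j 1) < reward g h B := by
  obtain ⟨i₀⟩ : Nonempty (Fin N) := ⟨⟨0, by omega⟩⟩
  have : Nontrivial (Fin M) := Fin.nontrivial_iff_two_le.2 hM
  obtain ⟨k, l, hkl⟩ := exists_pair_ne (Fin M)
  have hN' : (0 : ℝ) < N - 1 := by
    have : (2 : ℝ) ≤ N := by exact_mod_cast hN
    linarith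
  have hshift : ∀ A : Fin N → Fin M → ℝ,
      reward g h A = ∑ j, (h (∑ i, g (A i j)) - h 0) + M * h 0 := by
    intro A
    simp [reward, sum_sub_distrib]
  refine ⟨fun i => if i = i₀ then Pi.single l 1 else Pi.single k 1, ⟨?_, ?_⟩, fun j => ?_⟩
  · intro i j
    dsimp only
    split_ifs <;> simp only [Pi.single_apply] <;> split_ifs <;> norm_num
  · intro i
    dsimp only
    split_ifs <;> simp
  · have hcol : ∑ i, g ((if i = i₀ then Pi.single l 1 else Pi.single k 1 : Fin M → ℝ) k)
        = (N - 1) * g 1 := by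
      have : ∀ i, g ((if i = i₀ then Pi.single l 1 else Pi.single k 1 : Fin M → ℝ) k)
          = g 1 - if i = i₀ then g 1 else 0 := by
        intro i
        split_ifs <;> simp [hkl, hg0]
      simp only [this, sum_sub_distrib]
      simp [sub_mul]
    have hcol' : ∑ i, g ((if i = i₀ then Pi.single l 1 else Pi.single k 1 : Fin M → ℝ) l)
        = g 1 := by
      have : ∀ i, g ((if i = i₀ then Pi.single l 1 else Pi.single k 1 : Fin M → ℝ) l)
          = if i = i₀ then g 1 else 0 := by
        intro i
        split_ifs <;> simp [hkl.symm, hg0]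
      simp [this]
    rw [hshift, hshift, add_lt_add_iff_right]
    rw [sum_eq_single j (fun j' _ hj' => by simp [hj', hg0]) (by simp),
      sum_eq_add k l hkl (fun j' _ hj' => ?_) (by simp) (by simp), hcol, hcol']
    · have := hsub ((N - 1) * g 1) (g 1) (by positivity) hg1
      rw [show (N - 1) * g 1 + g 1 = N * g 1 by ring] at this
      simp only [Pi.single_eq_same, sum_const, card_univ, Fintype.card_fin, nsmul_eq_mul]
      linarith
    · have : ∀ i, g ((if i = i₀ then Pi.single l 1 else Pi.single k 1 : Fin M → ℝ) j') = 0 := by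
        intro i
        split_ifs <;> simp [hj'.1, hj'.2, hg0]
      simp [this]

/-- At a homogeneous allocation with an effort strictly between `0` and `1`, letting two agents
exchange a little effort between two tasks is an improvement. -/
lemma exists_reward_lt_of_mem_Ioo (hN : 2 ≤ N) (hg : StrictConvexOn ℝ (Set.Ioo 0 1) g)
    (hgnonneg : ∀ x ∈ Set.Icc (0 : ℝ) 1, 0 ≤ g x) (hh : StrictMonoOn h (Set.Ici 0))
    {c : Fin M → ℝ} (hc : c ∈ stdSimplex ℝ (Fin M)) {j : Fin M} (hj : c j ∈ Set.Ioo 0 1) :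
    ∃ B : Fin N → Fin M → ℝ, Admissible B ∧
      reward g h (fun _ : Fin N => c) < reward g h B := by
  have : Nontrivial (Fin N) := Fin.nontrivial_iff_two_le.2 hN
  obtain ⟨a, b, hab⟩ := exists_pair_ne (Fin N)
  obtain ⟨k, hkj, hk⟩ : ∃ k, k ≠ j ∧ c k ∈ Set.Ioo 0 1 := by
    have hsum := hc.2
    rw [← add_sum_erase _ _ (mem_univ j)] at hsum
    have hpos : 0 < ∑ x ∈ univ.erase j, c x := by linarith [hj.2]
    obtain ⟨k, hk, hk0⟩ := exists_lt_of_sum_lt (s := univ.erase j)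
      (f := fun _ => (0 : ℝ)) (g := c) (by rwa [sum_const_zero])
    have := single_le_sum (f := c) (fun x _ => hc.1 x) hk
    exact ⟨k, ne_of_mem_erase hk, hk0, by linarith [hj.1]⟩
  obtain ⟨e, he0, he⟩ := exists_between (a₁ := (0 : ℝ))
    (a₂ := min (min (c j) (1 - c j)) (min (c k) (1 - c k)))
    (lt_min (lt_min hj.1 (sub_pos.2 hj.2)) (lt_min hk.1 (sub_pos.2 hk.2)))
  simp only [lt_min_iff] at he
  obtain ⟨⟨h1, h2⟩, h3, h4⟩ := he
  set d : Fin M → ℝ := Pi.single j e - Pi.single k e with hd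
  have hdj : d j = e := by simp [hd, hkj.symm]
  have hdk : d k = -e := by simp [hd, hkj]
  have hdo : ∀ x, x ≠ j → x ≠ k → d x = 0 := by
    intro x hxj hxk
    simp [hd, hxj, hxk]
  have hdsum : ∑ x, d x = 0 := by simp [hd]
  clear_value d
  set σ : Fin N → ℝ := Pi.single a 1 - Pi.single b 1 with hσ
  have hσa : σ a = 1 := by simp [hσ, hab]
  have hσb : σ b = -1 := by simp [hσ, hab.symm]
  have hσo : ∀ i, i ≠ a → i ≠ b → σ i = 0 := by
    intro i hia hib
    simp [hσ, hia, hib]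
  clear_value σ
  have hadm : Admissible (fun i x => c x + σ i * d x) := by
    refine ⟨fun i x => ?_, fun i => ?_⟩
    · have hx := hc.1 x
      have hσi : σ i = 1 ∨ σ i = -1 ∨ σ i = 0 := by grind
      have hdx : (x = j ∧ d x = e) ∨ (x = k ∧ d x = -e) ∨ d x = 0 := by grind
      rcases hσi with hs | hs | hs <;> rcases hdx with ⟨rfl, ht⟩ | ⟨rfl, ht⟩ | ht <;>
        simp only [hs, ht] <;> linarith
    · rw [sum_add_distrib, ← mul_sum, hdsum, mul_zero, add_zero, hc.2]
  have hcol : ∀ x, c x + d x ∈ Set.Ioo 0 1 → c x - d x ∈ Set.Ioo 0 1 →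
      d x ≠ 0 → ∑ _i : Fin N, g (c x) < ∑ i, g (c x + σ i * d x) := by
    intro x hp hm hx
    rw [← sub_pos, ← sum_sub_distrib, sum_eq_add a b hab
      (fun i _ hi => by simp [hσo i hi.1 hi.2]) (by simp) (by simp), hσa, hσb]
    have := hg.2 hp hm (by intro h; apply hx; linarith)
      (by norm_num : (0 : ℝ) < 1 / 2) (by norm_num : (0 : ℝ) < 1 / 2) (by norm_num)
    simp only [smul_eq_mul] at this
    rw [show 1 / 2 * (c x + d x) + 1 / 2 * (c x - d x) = c x by ring] at this
    rw [one_mul, neg_one_mul, ← sub_eq_add_neg]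
    linarith
  have hlt : ∀ x, x = j ∨ x = k → ∑ _i : Fin N, g (c x) < ∑ i, g (c x + σ i * d x) := by
    rintro x (rfl | rfl)
    · apply hcol <;> rw [hdj]
      · constructor <;> linarith
      · constructor <;> linarith
      · exact he0.ne'
    · apply hcol <;> rw [hdk]
      · constructor <;> linarith
      · constructor <;> linarith
      · exact neg_ne_zero.2 he0.ne'
  have hnonneg : ∀ A : Fin N → Fin M → ℝ, Admissible A → ∀ x, ∑ i, g (A i x) ∈ Set.Ici 0 :=
    fun A hA x => sum_nonneg fun i _ => hgnonneg _ ⟨hA.1 i x, hA.le_one i x⟩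
  refine ⟨_, hadm, sum_lt_sum (fun x _ => ?_) ⟨j, mem_univ j, ?_⟩⟩
  · by_cases hx : x = j ∨ x = k
    · exact (hh (hnonneg _ (admissible_const hc) x) (hnonneg _ hadm x) (hlt x hx)).le
    · push Not at hx
      simp [hdo x hx.1 hx.2]
  · exact hh (hnonneg _ (admissible_const hc) j) (hnonneg _ hadm j) (hlt j (.inl rfl))

lemma eq_single_of_apply_eq_one {c : Fin M → ℝ} (hc : c ∈ stdSimplex ℝ (Fin M)) {j : Fin M}
    (hj : c j = 1) : c = Pi.single j 1 := by
  ext x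
  by_cases hx : x = j
  · subst hx
    simpa using hj
  · have hsum := hc.2
    rw [← add_sum_erase _ _ (mem_univ j)] at hsum
    have := single_le_sum (f := c) (fun x _ => hc.1 x) (mem_erase.2 ⟨hx, mem_univ x⟩)
    rw [Pi.single_eq_of_ne hx]
    linarith [hc.1 x]

/-- A vector of the standard simplex is a vertex or has an entry strictly between `0` and `1`. -/
lemma eq_single_or_exists_mem_Ioo {c : Fin M → ℝ} (hc : c ∈ stdSimplex ℝ (Fin M)) :
    (∃ j, c = Pi.single j 1) ∨ ∃ j, c j ∈ Set.Ioo 0 1 := by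
  obtain ⟨j, -, hj⟩ := exists_lt_of_sum_lt (s := univ) (f := fun _ => (0 : ℝ)) (g := c)
    (by rw [hc.2]; simp)
  have hle : c j ≤ 1 := by
    rw [← hc.2]
    exact single_le_sum (fun x _ => hc.1 x) (mem_univ j)
  rcases hle.lt_or_eq with hlt | heq
  · exact .inr ⟨j, hj, hlt⟩
  · exact .inl ⟨j, eq_single_of_apply_eq_one hc heq⟩

/-- Any allocation can be approximated in reward by one with all entries strictly between
`0` and `1`. -/
lemma exists_mem_Ioo_reward_gt (hM : 2 ≤ M)
    (hcont : ContinuousOn (reward (N := N) (M := M) g h) {A | Admissible A})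
    {B : Fin N → Fin M → ℝ} (hB : Admissible B) {m : ℝ} (hm : m < reward g h B) :
    ∃ B' : Fin N → Fin M → ℝ, Admissible B' ∧ (∀ i j, B' i j ∈ Set.Ioo 0 1) ∧
      m < reward g h B' := by
  have hM0 : (2 : ℝ) ≤ M := by exact_mod_cast hM
  have hMinv : (M : ℝ)⁻¹ ≤ 1 / 2 := by
    rw [one_div]
    exact inv_anti₀ (by norm_num) hM0
  have hMpos : 0 < (M : ℝ)⁻¹ := by positivity
  let γ : ℝ → Fin N → Fin M → ℝ := fun t i j => (1 - t) * B i j + t * (M : ℝ)⁻¹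
  have hγ : ∀ t ∈ Set.Ioo (0 : ℝ) 1, Admissible (γ t) := by
    intro t ht
    refine ⟨fun i j => ?_, fun i => ?_⟩
    · exact add_nonneg (mul_nonneg (by linarith [ht.2]) (hB.1 i j))
        (mul_nonneg ht.1.le hMpos.le)
    · simp only [γ, sum_add_distrib, ← mul_sum, hB.2 i]
      simp only [sum_const, card_univ, Fintype.card_fin, nsmul_eq_mul]
      field_simp
      ring
  have hγ0 : γ 0 = B := by
    ext i j
    simp [γ]
  have hnhds : Tendsto γ (𝓝[>] 0) (𝓝[{A | Admissible A}] B) := by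
    refine tendsto_nhdsWithin_iff.2 ⟨?_, ?_⟩
    · have : Continuous γ := by fun_prop
      have := this.tendsto 0
      rw [hγ0] at this
      exact this.mono_left nhdsWithin_le_nhds
    · filter_upwards [Ioo_mem_nhdsGT (zero_lt_one (α := ℝ))] with t ht using hγ t ht
  obtain ⟨t, htm, ht⟩ := ((((hcont B hB).tendsto.comp hnhds).eventually_const_lt hm).and
    (Ioo_mem_nhdsGT (zero_lt_one (α := ℝ)))).exists
  refine ⟨γ t, hγ t ht, fun i j => ⟨?_, ?_⟩, htm⟩
  · exact add_pos_of_nonneg_of_pos (mul_nonneg (by linarith [ht.2]) (hB.1 i j))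
      (mul_pos ht.1 hMpos)
  · have h1 : (1 - t) * B i j ≤ 1 - t :=
      mul_le_of_le_one_right (by linarith [ht.2]) (hB.le_one i j)
    have h2 : t * (M : ℝ)⁻¹ ≤ t * (1 / 2) := mul_le_mul_of_nonneg_left hMinv ht.1.le
    simp only [γ]
    linarith [ht.1]

end Allocations

/-- Convex-concave positive heterogeneity gain: with
`T_j(a_j) = Σ_i g(r_{ij})` for `g : [0,1] → ℝ≥0` strictly convex with `g 0 = 0`,
and `U(y) = Σ_j h(y_j)` for `h : ℝ≥0 → ℝ` strictly concave, increasing, with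
`h 0 = 0`, the heterogeneity gain is positive: some admissible allocation strictly
beats every admissible homogeneous allocation. -/
theorem stmt6 {N M : ℕ} (hN : 2 ≤ N) (hM : 2 ≤ M) (g h : ℝ → ℝ)
    (hg : StrictConvexOn ℝ (Set.Icc 0 1) g)
    (hgnonneg : ∀ x ∈ Set.Icc (0 : ℝ) 1, 0 ≤ g x) (hg0 : g 0 = 0)
    (hh : StrictConcaveOn ℝ (Set.Ici 0) h)
    (hhmono : MonotoneOn h (Set.Ici 0)) (hh0 : h 0 = 0) :
    ∃ B : Fin N → Fin M → ℝ, Admissible B ∧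
      ∀ A : Fin N → Fin M → ℝ, Admissible A → Homogeneous A →
        ∑ j, h (∑ i, g (A i j)) < ∑ j, h (∑ i, g (B i j)) := by
  have hgpos := fun {x : ℝ} => hg.pos_of_nonneg hgnonneg hg0 (x := x)
  obtain ⟨G, hGcont, hGg, hG1⟩ := hg.convexOn.exists_continuousOn_extension hgnonneg hg0
  obtain ⟨H, hHcont, hHh, hH0, hHmono, hHsub⟩ := hh.exists_continuousOn_extension hhmono
  have hG0 : G 0 = 0 := by rw [hGg 0 zero_ne_one, hg0]
  have hG1pos : 0 < G 1 := (hgpos (by norm_num)).trans_le hG1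
  have hGnonneg : ∀ x ∈ Set.Icc (0 : ℝ) 1, 0 ≤ G x := by
    intro x hx
    by_cases hx1 : x = 1
    · rw [hx1]; exact hG1pos.le
    · rw [hGg x hx1]; exact hgnonneg x hx
  have hGconv : StrictConvexOn ℝ (Set.Ioo 0 1) G :=
    (hg.subset Set.Ioo_subset_Icc_self (convex_Ioo 0 1)).congr
      fun x hx => (hGg x hx.2.ne).symm
  have hRcont := continuousOn_reward (N := N) (M := M) hGcont hGnonneg hHcont
  obtain ⟨c, hc, hcmax⟩ := (isCompact_stdSimplex ℝ (Fin M)).exists_isMaxOn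
    ⟨_, single_mem_stdSimplex ℝ (⟨0, by omega⟩ : Fin M)⟩
    (hRcont.comp (f := fun c (_ : Fin N) => c) (by fun_prop) fun c hc => admissible_const hc)
  obtain ⟨B₀, hB₀, hcB₀⟩ : ∃ B : Fin N → Fin M → ℝ, Admissible B ∧
      reward G H (fun _ : Fin N => c) < reward G H B := by
    rcases eq_single_or_exists_mem_Ioo hc with ⟨j, rfl⟩ | ⟨j, hj⟩
    · obtain ⟨B, hB, hlt⟩ := exists_reward_lt_of_single hN hM hG0 hG1pos hHsub
      exact ⟨B, hB, hlt j⟩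
    · exact exists_reward_lt_of_mem_Ioo hN hGconv hGnonneg hHmono hc hj
  obtain ⟨B₁, hB₁, hB₁mem, hcB₁⟩ := exists_mem_Ioo_reward_gt hM hRcont hB₀ hcB₀
  have hB₁eq : reward G H B₁ = reward g h B₁ := by
    refine sum_congr rfl fun j _ => ?_
    have : Nonempty (Fin N) := ⟨⟨0, by omega⟩⟩
    have hpos : 0 < ∑ i, g (B₁ i j) :=
      sum_pos (fun i _ => hgpos ⟨(hB₁mem i j).1, (hB₁mem i j).2.le⟩) univ_nonempty
    rw [sum_congr rfl fun i _ => hGg _ (hB₁mem i j).2.ne, hHh _ hpos.ne']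
  have hsub : ∀ x y, 0 < x → 0 < y → h (x + y) + h 0 < h x + h y := by
    intro x y hx hy
    have := hh.add_lt_add_of_lt (p := 0) (q := x) (r := y) (by simp)
      (by simp only [Set.mem_Ici]; linarith) hx hy
    rw [sub_zero] at this
    linarith
  obtain ⟨B₂, hB₂, hB₂lt⟩ := exists_reward_lt_of_single hN hM hg0 (hgpos (by norm_num)) hsub
  have hhH : ∀ x, h x ≤ H x := by
    intro x
    by_cases hx : x = 0
    · rw [hx]; exact hH0
    · rw [hHh x hx]
  have key : ∀ A : Fin N → Fin M → ℝ, Admissible A → Homogeneous A →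
      reward g h A < max (reward g h B₁) (reward g h B₂) := by
    intro A hA hhom
    let i₀ : Fin N := ⟨0, by omega⟩
    obtain ⟨a, rfl⟩ : ∃ a, A = fun _ => a := ⟨A i₀, funext fun i => hhom i i₀⟩
    have ha : a ∈ stdSimplex ℝ (Fin M) := ⟨hA.1 i₀, hA.2 i₀⟩
    by_cases hvert : ∃ j, a = Pi.single j 1
    · obtain ⟨j, rfl⟩ := hvert
      exact lt_max_of_lt_right (hB₂lt j)
    · refine lt_max_of_lt_left ?_
      have hne : ∀ j, a j ≠ 1 := fun j hj => hvert ⟨j, eq_single_of_apply_eq_one ha hj⟩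
      calc reward g h (fun _ : Fin N => a) ≤ reward G H (fun _ : Fin N => a) := by
            refine sum_le_sum fun j _ => ?_
            simp only [hGg _ (hne j)]
            exact hhH _
        _ ≤ reward G H (fun _ : Fin N => c) := hcmax ha
        _ < reward g h B₁ := hB₁eq ▸ hcB₁
  rcases le_total (reward g h B₁) (reward g h B₂) with hle | hle
  · exact ⟨B₂, hB₂, fun A hA hhom => (key A hA hhom).trans_eq (max_eq_right hle)⟩
  · exact ⟨B₁, hB₁, fun A hA hhom => (key A hA hhom).trans_eq (max_eq_left hle)⟩
end

section
/- Let N ≥ 1 and M ≥ 2, and consider discrete allocations (each agent assigned to exactly one task) with team reward R(A) = min_{j} (1/N) Σ_{i=1}^N r_{ij}. Then the maximum of R over discrete allocations where all agents pick the same task equals 0, the maximum over all discrete allocations equals ⌊N/M⌋/N (attained by a most-balanced assignment of agents to tasks), and hence the discrete heterogeneity gain is ΔR_D = ⌊N/M⌋/N. -/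
open Finset

/-- A discrete allocation: 0/1 entries, each agent (row) picks exactly one task. -/
def DiscreteAlloc {N M : ℕ} (A : Fin N → Fin M → ℝ) : Prop :=
  (∀ i j, A i j = 0 ∨ A i j = 1) ∧ ∀ i, ∑ j, A i j = 1

namespace DiscreteAlloc

variable {N M : ℕ} {A : Fin N → Fin M → ℝ}

lemma nonneg (hA : DiscreteAlloc A) (i : Fin N) (j : Fin M) : 0 ≤ A i j := by
  rcases hA.1 i j with h | h <;> simp [h]

lemma reward_nonneg (hA : DiscreteAlloc A) : 0 ≤ ⨅ j, (∑ i, A i j) / (N : ℝ) :=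
  Real.iInf_nonneg fun j =>
    div_nonneg (Finset.sum_nonneg fun i _ => hA.nonneg i j) (Nat.cast_nonneg N)

lemma sum_eq_card (hA : DiscreteAlloc A) (j : Fin M) :
    ∑ i, A i j = ((univ.filter fun i => A i j = 1).card : ℝ) := by
  rw [Finset.card_filter, Nat.cast_sum]
  refine Finset.sum_congr rfl fun i _ => ?_
  rcases hA.1 i j with h | h <;> simp [h]

lemma exists_sum_le (hA : DiscreteAlloc A) (hM : 0 < M) :
    ∃ j, ∑ i, A i j ≤ ((N / M : ℕ) : ℝ) := by
  by_contra! h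
  have hcard (j : Fin M) : ((N / M + 1 : ℕ) : ℝ) ≤ ∑ i, A i j := by
    have hj := h j
    rw [hA.sum_eq_card] at hj ⊢
    exact_mod_cast hj
  have htotal : ∑ j, ∑ i, A i j = N := by
    rw [Finset.sum_comm]
    simp [hA.2]
  have hle : ((M * (N / M + 1) : ℕ) : ℝ) ≤ N := by
    rw [← htotal]
    simpa [mul_add] using Finset.sum_le_sum fun j (_ : j ∈ univ) => hcard j
  exact (Nat.lt_mul_div_succ N hM).not_ge (by exact_mod_cast hle)

lemma reward_le (hA : DiscreteAlloc A) (hM : 0 < M) :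
    ⨅ j, (∑ i, A i j) / (N : ℝ) ≤ ((N / M : ℕ) : ℝ) / N := by
  obtain ⟨j, hj⟩ := hA.exists_sum_le hM
  exact (ciInf_le (Set.finite_range _).bddBelow j).trans (by gcongr)

lemma reward_eq_zero_of_homogeneous (hA : DiscreteAlloc A) (hom : Homogeneous A)
    (hN : 1 ≤ N) (hM : 2 ≤ M) : ⨅ j, (∑ i, A i j) / (N : ℝ) = 0 := by
  obtain ⟨j, hj⟩ : ∃ j, A ⟨0, hN⟩ j = 0 := by
    by_contra! h
    have hsum := hA.2 ⟨0, hN⟩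
    rw [Finset.sum_congr rfl fun j _ => (hA.1 ⟨0, hN⟩ j).resolve_left (h j)] at hsum
    have : M = 1 := by simpa using hsum
    omega
  refine le_antisymm ((ciInf_le (Set.finite_range _).bddBelow j).trans_eq ?_) hA.reward_nonneg
  simp [fun i => (congrFun (hom i ⟨0, hN⟩) j).trans hj]

end DiscreteAlloc

/-- The allocation in which agent `i` picks the task `f i`. -/
def choiceAlloc {N M : ℕ} (f : Fin N → Fin M) (i : Fin N) (j : Fin M) : ℝ :=
  if f i = j then 1 else 0

lemma discreteAlloc_choiceAlloc {N M : ℕ} (f : Fin N → Fin M) :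
    DiscreteAlloc (choiceAlloc f) :=
  ⟨fun i j => (ite_eq_or_eq (f i = j) 1 0).symm, fun i => by simp [choiceAlloc]⟩

/-- The round-robin assignment gives every task at least `⌊N/M⌋` agents. -/
lemma div_le_sum_choiceAlloc_mod {N M : ℕ} (hM : 0 < M) (j : Fin M) :
    ((N / M : ℕ) : ℝ) ≤
      ∑ i : Fin N, choiceAlloc (fun i => ⟨i % M, Nat.mod_lt i hM⟩) i j := by
  have hcount : ∑ i : Fin N, choiceAlloc (fun i => ⟨i % M, Nat.mod_lt i hM⟩) i j =
      (Nat.count (· ≡ j [MOD M]) N : ℝ) := by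
    rw [Nat.count_eq_card_filter_range, Finset.card_filter, Nat.cast_sum,
      ← Fin.sum_univ_eq_sum_range fun i => ((if i ≡ j [MOD M] then 1 else 0 : ℕ) : ℝ)]
    simp [choiceAlloc, Fin.ext_iff, Nat.ModEq, Nat.mod_eq_of_lt j.isLt]
  rw [hcount, Nat.count_modEq_card N hM]
  exact_mod_cast Nat.le_add_right _ _

/-- `U = min`, `T = mean`, discrete allocations: for `N ≥ 1`,
`M ≥ 2`, the best homogeneous reward is `0`, the best overall reward is
`⌊N/M⌋/N`, and the discrete heterogeneity gain is `ΔR_D = ⌊N/M⌋/N`. -/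
theorem stmt15 {N M : ℕ} (hN : 1 ≤ N) (hM : 2 ≤ M) :
    IsGreatest {r : ℝ | ∃ A : Fin N → Fin M → ℝ,
        DiscreteAlloc A ∧ Homogeneous A ∧ (⨅ j, (∑ i, A i j) / N) = r} 0 ∧
    IsGreatest {r : ℝ | ∃ A : Fin N → Fin M → ℝ,
        DiscreteAlloc A ∧ (⨅ j, (∑ i, A i j) / N) = r} (((N / M : ℕ) : ℝ) / N) ∧
    sSup {r : ℝ | ∃ A : Fin N → Fin M → ℝ,
        DiscreteAlloc A ∧ (⨅ j, (∑ i, A i j) / N) = r} -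
      sSup {r : ℝ | ∃ A : Fin N → Fin M → ℝ,
        DiscreteAlloc A ∧ Homogeneous A ∧ (⨅ j, (∑ i, A i j) / N) = r} =
      ((N / M : ℕ) : ℝ) / N := by
  have hM₀ : 0 < M := by omega
  have : Nonempty (Fin M) := ⟨⟨0, hM₀⟩⟩
  have hhom : IsGreatest {r : ℝ | ∃ A : Fin N → Fin M → ℝ,
      DiscreteAlloc A ∧ Homogeneous A ∧ (⨅ j, (∑ i, A i j) / N) = r} 0 := by
    refine ⟨?_, ?_⟩
    · have hA := discreteAlloc_choiceAlloc fun _ : Fin N => (⟨0, hM₀⟩ : Fin M)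
      have hom : Homogeneous (choiceAlloc fun _ : Fin N => (⟨0, hM₀⟩ : Fin M)) :=
        fun _ _ => rfl
      exact ⟨_, hA, hom, hA.reward_eq_zero_of_homogeneous hom hN hM⟩
    · rintro _ ⟨A, hA, hom, rfl⟩
      exact (hA.reward_eq_zero_of_homogeneous hom hN hM).le
  have hhet : IsGreatest {r : ℝ | ∃ A : Fin N → Fin M → ℝ,
      DiscreteAlloc A ∧ (⨅ j, (∑ i, A i j) / N) = r} (((N / M : ℕ) : ℝ) / N) := by
    refine ⟨?_, ?_⟩
    · have hA := discreteAlloc_choiceAlloc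
        fun i : Fin N => (⟨i % M, Nat.mod_lt i hM₀⟩ : Fin M)
      refine ⟨_, hA, le_antisymm (hA.reward_le hM₀) (le_ciInf fun j => ?_)⟩
      gcongr
      exact div_le_sum_choiceAlloc_mod hM₀ j
    · rintro _ ⟨A, hA, rfl⟩
      exact hA.reward_le hM₀
  exact ⟨hhom, hhet, by rw [hhet.csSup_eq, hhom.csSup_eq, sub_zero]⟩
end
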